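/- arXiv:0811.2719 — 2 statements merged into one kernel-verified Lean document; each statement's English description precedes it below -/
import Mathlib

section
/- Let W be a complex vector space of dimension 2m with m ≥ 1, Ω a nondegenerate alternating bilinear form on W, and sp(Ω) = {A ∈ End(W) : Ω(Ax,y) + Ω(x,Ay) = 0}. Consider the Lie subalgebra 𝔤 = {A ⊗ id_{ℂ²} + id_W ⊗ C : A ∈ sp(Ω), C ∈ sl(2,ℂ)} of End(W ⊗ ℂ²). Then 𝔤 is a skew-Berger algebra. -/
open TensorProduct

/-- A skew-curvature tensor of type `h`. -/
def IsSkewCurv {V : Type*} [AddCommGroup V] [Module ℂ V]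
    (h : Submodule ℂ (Module.End ℂ V)) (R : V →ₗ[ℂ] V →ₗ[ℂ] Module.End ℂ V) : Prop :=
  (∀ x y, R x y = R y x) ∧ (∀ x y, R x y ∈ h) ∧
  (∀ x y z, R x y z + R y z x + R z x y = 0)

/-- `h` is a skew-Berger algebra. -/
def IsSkewBerger {V : Type*} [AddCommGroup V] [Module ℂ V]
    (h : Submodule ℂ (Module.End ℂ V)) : Prop :=
  h = Submodule.span ℂ
    {T | ∃ R : V →ₗ[ℂ] V →ₗ[ℂ] Module.End ℂ V,
      IsSkewCurv h R ∧ ∃ x y : V, T = R x y}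

/-!
For `A ∈ sp(Ω)` there is a skew-curvature tensor `R_A` on `W ⊗ U`, where `U` is a plane with area
form `ω`. Writing `(a ∘ b) z = Ω(a, z) b + Ω(b, z) a`,
  `R_A(a ⊗ u, b ⊗ v) = ω(u, v) Φ_A(a, b) ⊗ 1 + Ω(A a, b) 1 ⊗ (u ∘ v)`,
  `Φ_A(a, b) = a ∘ (A b) - (A a) ∘ b - Ω(a, b) A`.
Its Bianchi sum on pure tensors is `-θ ⊗ (ω(u, v) w + ω(v, w) u + ω(w, u) v)`, where
`θ = Ω(a, b) A c + Ω(b, c) A a + Ω(c, a) A b`, and the second factor vanishes since `dim U = 2`.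

For `A = p ∘ p` and `Ω(p, q) ≠ 0`, the value `R_A(q ⊗ u, q ⊗ v)` is a nonzero multiple of
`1 ⊗ (u ∘ v)`, and `Φ_A(p, q) = Ω(p, q) p ∘ p`, so the values of the `R_A` span all
`1 ⊗ (u ∘ v)` and all `(a ∘ b) ⊗ 1`. The `u ∘ v` span `sp(ω) = sl(U)`. For arbitrary `A`, the sum
`Φ_A(p, q) + Ω(p, q) A` is a combination of elements `a ∘ b`, which gives `A ⊗ 1` whatever the
dimension of `W` and the radical of `Ω`.
-/

namespace SkewBerger

section SkewAdjoint

variable {R M : Type*} [CommRing R] [AddCommGroup M] [Module R M] {B : M →ₗ[R] M →ₗ[R] R}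

lemma exists_apply_apply_ne_zero (hB : B ≠ 0) : ∃ x y, B x y ≠ 0 := by
  simpa [LinearMap.ext_iff₂] using hB

lemma mem_skewAdjointSubmodule_iff {A : Module.End R M} :
    A ∈ B.skewAdjointSubmodule ↔ ∀ x y, B (A x) y + B x (A y) = 0 := by
  simp [LinearMap.IsSkewAdjoint, LinearMap.IsAdjointPair, eq_neg_iff_add_eq_zero]

lemma apply_swap_of_mem_skewAdjointSubmodule (hB : B.IsAlt) {A : Module.End R M}
    (hA : A ∈ B.skewAdjointSubmodule) (x y : M) : B (A x) y = B (A y) x := by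
  linear_combination mem_skewAdjointSubmodule_iff.1 hA x y + hB.neg (A y) x

variable (B)

/-- The endomorphism `a ∘ b : z ↦ B(a, z) b + B(b, z) a`, i.e. the image of `ab` under the map
`Sym² M → sp(B)`. -/
def symEnd : M →ₗ[R] M →ₗ[R] Module.End R M :=
  LinearMap.smulRightₗ ∘ₗ B + (LinearMap.smulRightₗ ∘ₗ B).flip

@[simp] lemma symEnd_apply (a b z : M) : symEnd B a b z = B a z • b + B b z • a := rfl

lemma symEnd_comm (a b : M) : symEnd B a b = symEnd B b a := add_comm _ _

lemma two_smul_symEnd (a b : M) :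
    (2 : R) • symEnd B a b = symEnd B (a + b) (a + b) - symEnd B a a - symEnd B b b := by
  simp only [map_add, LinearMap.add_apply, symEnd_comm B b a]
  module

/-- The component `Φ_A` in `sp(B)` of the curvature tensor attached to `A ∈ sp(B)`. -/
def symplecticPart (A : Module.End R M) : M →ₗ[R] M →ₗ[R] Module.End R M :=
  (symEnd B).compl₂ A - symEnd B ∘ₗ A - B.compr₂ (LinearMap.toSpanSingleton R _ A)

@[simp] lemma symplecticPart_apply (A : Module.End R M) (a b : M) :
    symplecticPart B A a b = symEnd B a (A b) - symEnd B (A a) b - B a b • A := rfl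

variable {B}

lemma symEnd_mem (hB : B.IsAlt) (a b : M) : symEnd B a b ∈ B.skewAdjointSubmodule := by
  refine mem_skewAdjointSubmodule_iff.2 fun x y => ?_
  simp only [symEnd_apply, map_add, map_smul, LinearMap.add_apply, LinearMap.smul_apply,
    smul_eq_mul, ← hB.neg a x, ← hB.neg b x]
  ring

lemma symplecticPart_mem (hB : B.IsAlt) {A : Module.End R M} (hA : A ∈ B.skewAdjointSubmodule)
    (a b : M) : symplecticPart B A a b ∈ B.skewAdjointSubmodule :=
  sub_mem (sub_mem (symEnd_mem hB _ _) (symEnd_mem hB _ _)) (Submodule.smul_mem _ _ hA)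

lemma symplecticPart_comm (hB : B.IsAlt) (A : Module.End R M) (a b : M) :
    symplecticPart B A b a = -symplecticPart B A a b := by
  simp only [symplecticPart_apply, symEnd_comm B b (A a), symEnd_comm B (A b) a, ← hB.neg a b]
  module

lemma symplecticPart_self (hB : B.IsAlt) (A : Module.End R M) (a : M) :
    symplecticPart B A a a = 0 := by
  simp [symEnd_comm B (A a) a, hB.self_eq_zero a]

lemma symplecticPart_symEnd_self (hB : B.IsAlt) (p q : M) :
    symplecticPart B (symEnd B p p) p q = B p q • symEnd B p p := by
  simp [hB.self_eq_zero p]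

lemma symplecticPart_apply_add_sub (hB : B.IsAlt) {A : Module.End R M}
    (hA : A ∈ B.skewAdjointSubmodule) (a b c : M) :
    symplecticPart B A a b c + B (A c) a • b - B (A b) c • a =
      -(B a b • A c + B b c • A a + B c a • A b) := by
  simp only [symplecticPart_apply, symEnd_apply, LinearMap.sub_apply, LinearMap.smul_apply,
    apply_swap_of_mem_skewAdjointSubmodule hB hA c a, ← hB.neg c a]
  module

end SkewAdjoint

section Plane

variable {R M : Type*} [CommRing R] [AddCommGroup M] [Module R M]

/-- The identity satisfied by every alternating form on a free module of rank at most `2`; it is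
the form in which "`M` is a plane" enters the argument. -/
def IsPlanar (B : M →ₗ[R] M →ₗ[R] R) : Prop :=
  ∀ u v w, B u v • w + B v w • u + B w u • v = 0

lemma two_mul_smul_eq_symEnd_sub {B : M →ₗ[R] M →ₗ[R] R} (hB : B.IsAlt) (hplane : IsPlanar B)
    {C : Module.End R M} (hC : C ∈ B.skewAdjointSubmodule) (u v : M) :
    (2 * B u v) • C = symEnd B u (C v) - symEnd B v (C u) := by
  ext z
  have hCz := hplane u v (C z)
  have hz := congrArg C (hplane u v z)
  simp only [map_add, map_smul, map_zero, ← hB.neg u z] at hz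
  simp only [LinearMap.smul_apply, LinearMap.sub_apply, symEnd_apply,
    apply_swap_of_mem_skewAdjointSubmodule hB hC _ z, ← hB.neg _ (C z)] at hCz ⊢
  linear_combination (norm := module) hz + hCz

variable (R) in
/-- The standard area form `u₀ v₁ - u₁ v₀` on `R²`. -/
def areaForm : (Fin 2 → R) →ₗ[R] (Fin 2 → R) →ₗ[R] R :=
  (LinearMap.mul R R).compl₁₂ (.proj 0) (.proj 1) - (LinearMap.mul R R).compl₁₂ (.proj 1) (.proj 0)

lemma areaForm_apply (u v : Fin 2 → R) : areaForm R u v = u 0 * v 1 - u 1 * v 0 := rfl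

lemma isAlt_areaForm : (areaForm R).IsAlt := fun u => by
  rw [areaForm_apply]
  ring

lemma areaForm_ne_zero [Nontrivial R] : areaForm R ≠ 0 := fun h => by
  simpa [areaForm_apply] using LinearMap.congr_fun₂ h ![1, 0] ![0, 1]

lemma isPlanar_areaForm : IsPlanar (areaForm R) := fun u v w => by
  ext i
  fin_cases i <;> simp [areaForm_apply] <;> ring

lemma areaForm_apply_add_apply (C : Module.End R (Fin 2 → R)) (u v : Fin 2 → R) :
    areaForm R (C u) v + areaForm R u (C v) = LinearMap.trace R _ C * areaForm R u v := by
  obtain ⟨A, rfl⟩ := Matrix.toLin'.surjective C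
  simp only [areaForm_apply, Matrix.toLin'_apply, Matrix.mulVec_fin_two, Matrix.cons_val_zero,
    Matrix.cons_val_one, Matrix.cons_val_fin_one, Matrix.trace_toLin'_eq, Matrix.trace_fin_two]
  ring

lemma mem_skewAdjointSubmodule_areaForm {C : Module.End R (Fin 2 → R)} :
    C ∈ (areaForm R).skewAdjointSubmodule ↔ LinearMap.trace R _ C = 0 := by
  simp only [mem_skewAdjointSubmodule_iff, areaForm_apply_add_apply]
  refine ⟨fun h => ?_, fun h u v => by rw [h, zero_mul]⟩
  simpa [areaForm_apply] using h ![1, 0] ![0, 1]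

end Plane

section Curvature

variable {R W U : Type*} [CommRing R] [AddCommGroup W] [Module R W] [AddCommGroup U] [Module R U]

/-- The Lie algebra `sp(Ω) ⊗ 1 + 1 ⊗ sp(ω)` of endomorphisms of `W ⊗ U`. -/
def tensorSum (Ω : W →ₗ[R] W →ₗ[R] R) (ω : U →ₗ[R] U →ₗ[R] R) :
    Submodule R (Module.End R (W ⊗[R] U)) :=
  Ω.skewAdjointSubmodule.map (LinearMap.rTensorHom U) ⊔
    ω.skewAdjointSubmodule.map (LinearMap.lTensorHom W)

/-- The bilinear map on `W ⊗ U` with values `F(a, b) ⊗ G(u, v)` on pure tensors. -/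
def tensorEnd (F : W →ₗ[R] W →ₗ[R] Module.End R W) (G : U →ₗ[R] U →ₗ[R] Module.End R U) :
    W ⊗[R] U →ₗ[R] W ⊗[R] U →ₗ[R] Module.End R (W ⊗[R] U) :=
  (TensorProduct.map₂ F G).compr₂ (TensorProduct.homTensorHomMap (.id R) W U W U)

lemma tensorEnd_tmul (F : W →ₗ[R] W →ₗ[R] Module.End R W) (G : U →ₗ[R] U →ₗ[R] Module.End R U)
    (a b : W) (u v : U) :
    tensorEnd F G (a ⊗ₜ u) (b ⊗ₜ v) = TensorProduct.map (F a b) (G u v) := rfl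

/-- The skew-curvature tensor `R_A` attached to `A ∈ sp(Ω)`. -/
def curvature (Ω : W →ₗ[R] W →ₗ[R] R) (ω : U →ₗ[R] U →ₗ[R] R) (A : Module.End R W) :
    W ⊗[R] U →ₗ[R] W ⊗[R] U →ₗ[R] Module.End R (W ⊗[R] U) :=
  tensorEnd (symplecticPart Ω A) (ω.compr₂ (Algebra.linearMap R _)) +
    tensorEnd ((Ω ∘ₗ A).compr₂ (Algebra.linearMap R _)) (symEnd ω)

lemma curvature_tmul (Ω : W →ₗ[R] W →ₗ[R] R) (ω : U →ₗ[R] U →ₗ[R] R) (A : Module.End R W)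
    (a b : W) (u v : U) :
    curvature Ω ω A (a ⊗ₜ u) (b ⊗ₜ v) =
      ω u v • (symplecticPart Ω A a b).rTensor U + Ω (A a) b • (symEnd ω u v).lTensor W := by
  ext c w
  simp only [curvature, tensorEnd_tmul, LinearMap.add_apply, LinearMap.compr₂_apply,
    LinearMap.comp_apply, LinearMap.smul_apply, Algebra.linearMap_apply,
    TensorProduct.AlgebraTensorModule.curry_apply, TensorProduct.curry_apply,
    LinearMap.restrictScalars_self, TensorProduct.map_tmul, Module.algebraMap_end_apply,
    TensorProduct.tmul_smul, TensorProduct.smul_tmul', LinearMap.rTensor_tmul,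
    LinearMap.lTensor_tmul]

variable {Ω : W →ₗ[R] W →ₗ[R] R} {ω : U →ₗ[R] U →ₗ[R] R}

lemma curvature_tmul_comm (hΩ : Ω.IsAlt) (hω : ω.IsAlt) {A : Module.End R W}
    (hA : A ∈ Ω.skewAdjointSubmodule) (a b : W) (u v : U) :
    curvature Ω ω A (a ⊗ₜ u) (b ⊗ₜ v) = curvature Ω ω A (b ⊗ₜ v) (a ⊗ₜ u) := by
  rw [curvature_tmul, curvature_tmul, symplecticPart_comm hΩ A a b, ← hω.neg u v,
    apply_swap_of_mem_skewAdjointSubmodule hΩ hA b a, symEnd_comm ω v u,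
    LinearMap.rTensor_neg, neg_smul_neg]

lemma curvature_tmul_mem (hΩ : Ω.IsAlt) (hω : ω.IsAlt) {A : Module.End R W}
    (hA : A ∈ Ω.skewAdjointSubmodule) (a b : W) (u v : U) :
    curvature Ω ω A (a ⊗ₜ u) (b ⊗ₜ v) ∈ tensorSum Ω ω := by
  rw [curvature_tmul]
  exact Submodule.add_mem_sup
    (Submodule.smul_mem _ _ (Submodule.mem_map_of_mem (symplecticPart_mem hΩ hA a b)))
    (Submodule.smul_mem _ _ (Submodule.mem_map_of_mem (symEnd_mem hω u v)))

lemma curvature_tmul_bianchi (hΩ : Ω.IsAlt) (hω : ω.IsAlt) (hplane : IsPlanar ω)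
    {A : Module.End R W} (hA : A ∈ Ω.skewAdjointSubmodule) (a b c : W) (u v w : U) :
    curvature Ω ω A (a ⊗ₜ u) (b ⊗ₜ v) (c ⊗ₜ w) + curvature Ω ω A (b ⊗ₜ v) (c ⊗ₜ w) (a ⊗ₜ u) +
      curvature Ω ω A (c ⊗ₜ w) (a ⊗ₜ u) (b ⊗ₜ v) = 0 := by
  calc
    _ = (symplecticPart Ω A a b c + Ω (A c) a • b - Ω (A b) c • a) ⊗ₜ[R] (ω u v • w) +
        (symplecticPart Ω A b c a + Ω (A a) b • c - Ω (A c) a • b) ⊗ₜ[R] (ω v w • u) +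
        (symplecticPart Ω A c a b + Ω (A b) c • a - Ω (A a) b • c) ⊗ₜ[R] (ω w u • v) := by
      simp only [curvature_tmul, LinearMap.add_apply, LinearMap.smul_apply,
        LinearMap.rTensor_tmul, LinearMap.lTensor_tmul, symEnd_apply, TensorProduct.tmul_add,
        TensorProduct.add_tmul, TensorProduct.sub_tmul, TensorProduct.tmul_smul,
        ← TensorProduct.smul_tmul', ← hω.neg u w, ← hω.neg v u, ← hω.neg w v]
      module
    _ = (-(Ω a b • A c + Ω b c • A a + Ω c a • A b)) ⊗ₜ[R]
          (ω u v • w + ω v w • u + ω w u • v) := by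
      rw [symplecticPart_apply_add_sub hΩ hA, symplecticPart_apply_add_sub hΩ hA,
        symplecticPart_apply_add_sub hΩ hA, TensorProduct.tmul_add, TensorProduct.tmul_add,
        ← add_rotate (Ω a b • A c), add_rotate (Ω c a • A b)]
    _ = 0 := by rw [hplane, TensorProduct.tmul_zero]

end Curvature

lemma bianchi_of_span_eq_top {K V : Type*} [CommSemiring K] [AddCommMonoid V] [Module K V]
    {R : V →ₗ[K] V →ₗ[K] Module.End K V} {s : Set V} (hs : Submodule.span K s = ⊤)
    (hR : ∀ x ∈ s, ∀ y ∈ s, ∀ z ∈ s, R x y z + R y z x + R z x y = 0) (x y z : V) :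
    R x y z + R y z x + R z x y = 0 := by
  have extend (x y : V) (hxy : ∀ z ∈ s, R x y z + R y z x + R z x y = 0) :
      ∀ z, R x y z + R y z x + R z x y = 0 :=
    LinearMap.congr_fun (f := R x y + (R y).flip x + (R.flip x).flip y) (g := 0)
      (LinearMap.ext_on hs hxy)
  have rotate {x y z : V} (hxyz : R x y z + R y z x + R z x y = 0) :
      R y z x + R z x y + R x y z = 0 := by
    rw [← hxyz, add_rotate (R x y z)]
  exact extend x y (fun z hz => rotate <| extend z x (fun y hy =>
    rotate <| extend y z (hR y hy z hz) x) y) z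

section SkewCurv

variable {V : Type*} [AddCommGroup V] [Module ℂ V] {h : Submodule ℂ (Module.End ℂ V)}

lemma isSkewCurv_of_span_eq_top {R : V →ₗ[ℂ] V →ₗ[ℂ] Module.End ℂ V} {s : Set V}
    (hs : Submodule.span ℂ s = ⊤) (hcomm : ∀ x ∈ s, ∀ y ∈ s, R x y = R y x)
    (hmem : ∀ x ∈ s, ∀ y ∈ s, R x y ∈ h)
    (hbianchi : ∀ x ∈ s, ∀ y ∈ s, ∀ z ∈ s, R x y z + R y z x + R z x y = 0) :
    IsSkewCurv h R := by
  refine ⟨fun x y => ?_, fun x y => ?_, bianchi_of_span_eq_top hs hbianchi⟩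
  · have hflip : R = R.flip :=
      LinearMap.ext_on hs fun x hx => LinearMap.ext_on hs fun y hy => hcomm x hx y hy
    exact LinearMap.congr_fun₂ hflip x y
  · have hle : Submodule.map₂ R ⊤ ⊤ ≤ h := by
      rw [← hs, Submodule.map₂_span_span, Submodule.span_le]
      rintro _ ⟨x, hx, y, hy, rfl⟩
      exact hmem x hx y hy
    exact hle (Submodule.apply_mem_map₂ R Submodule.mem_top Submodule.mem_top)

variable (h) in
/-- The span of all values of skew-curvature tensors of type `h`, so that `h` is skew-Berger if and
only if it equals `curvatureSpan h`. -/
def curvatureSpan : Submodule ℂ (Module.End ℂ V) :=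
  Submodule.span ℂ {T | ∃ R : V →ₗ[ℂ] V →ₗ[ℂ] Module.End ℂ V, IsSkewCurv h R ∧ ∃ x y, T = R x y}

lemma apply_mem_curvatureSpan {R : V →ₗ[ℂ] V →ₗ[ℂ] Module.End ℂ V}
    (hR : IsSkewCurv h R) (x y : V) : R x y ∈ curvatureSpan h :=
  Submodule.subset_span ⟨R, hR, x, y, rfl⟩

lemma isSkewBerger_of_le_curvatureSpan (hle : h ≤ curvatureSpan h) : IsSkewBerger h := by
  refine le_antisymm hle (Submodule.span_le.2 ?_)
  rintro _ ⟨R, hR, x, y, rfl⟩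
  exact hR.2.1 x y

end SkewCurv

section TensorSum

variable {W U : Type*} [AddCommGroup W] [Module ℂ W] [AddCommGroup U] [Module ℂ U]
  {Ω : W →ₗ[ℂ] W →ₗ[ℂ] ℂ} {ω : U →ₗ[ℂ] U →ₗ[ℂ] ℂ}

lemma isSkewCurv_curvature (hΩ : Ω.IsAlt) (hω : ω.IsAlt) (hplane : IsPlanar ω)
    {A : Module.End ℂ W} (hA : A ∈ Ω.skewAdjointSubmodule) :
    IsSkewCurv (tensorSum Ω ω) (curvature Ω ω A) := by
  refine isSkewCurv_of_span_eq_top (TensorProduct.span_tmul_eq_top ℂ W U) ?_ ?_ ?_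
  · rintro _ ⟨a, u, rfl⟩ _ ⟨b, v, rfl⟩
    exact curvature_tmul_comm hΩ hω hA a b u v
  · rintro _ ⟨a, u, rfl⟩ _ ⟨b, v, rfl⟩
    exact curvature_tmul_mem hΩ hω hA a b u v
  · rintro _ ⟨a, u, rfl⟩ _ ⟨b, v, rfl⟩ _ ⟨c, w, rfl⟩
    exact curvature_tmul_bianchi hΩ hω hplane hA a b c u v w

lemma lTensor_symEnd_mem_curvatureSpan (hΩ : Ω.IsAlt) (hΩ0 : Ω ≠ 0) (hω : ω.IsAlt)
    (hplane : IsPlanar ω) (u v : U) :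
    (symEnd ω u v).lTensor W ∈ curvatureSpan (tensorSum Ω ω) := by
  obtain ⟨p, q, hpq⟩ := exists_apply_apply_ne_zero hΩ0
  have hmem := apply_mem_curvatureSpan
    (isSkewCurv_curvature hΩ hω hplane (symEnd_mem hΩ p p)) (q ⊗ₜ u) (q ⊗ₜ v)
  have hcoeff : Ω (symEnd Ω p p q) q ≠ 0 := by
    simpa [← two_mul] using hpq
  rwa [curvature_tmul, symplecticPart_self hΩ, LinearMap.rTensor_zero, smul_zero, zero_add,
    Submodule.smul_mem_iff _ hcoeff] at hmem

lemma rTensor_symplecticPart_mem_curvatureSpan (hΩ : Ω.IsAlt) (hΩ0 : Ω ≠ 0) (hω : ω.IsAlt)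
    (hω0 : ω ≠ 0) (hplane : IsPlanar ω) {A : Module.End ℂ W} (hA : A ∈ Ω.skewAdjointSubmodule)
    (a b : W) : (symplecticPart Ω A a b).rTensor U ∈ curvatureSpan (tensorSum Ω ω) := by
  obtain ⟨u, v, huv⟩ := exists_apply_apply_ne_zero hω0
  have hmem := apply_mem_curvatureSpan (isSkewCurv_curvature hΩ hω hplane hA) (a ⊗ₜ u) (b ⊗ₜ v)
  rwa [curvature_tmul, Submodule.add_mem_iff_left _
      (Submodule.smul_mem _ _ (lTensor_symEnd_mem_curvatureSpan hΩ hΩ0 hω hplane u v)),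
    Submodule.smul_mem_iff _ huv] at hmem

lemma rTensor_symEnd_mem_curvatureSpan (hΩ : Ω.IsAlt) (hΩ0 : Ω ≠ 0) (hω : ω.IsAlt)
    (hω0 : ω ≠ 0) (hplane : IsPlanar ω) (a b : W) :
    (symEnd Ω a b).rTensor U ∈ curvatureSpan (tensorSum Ω ω) := by
  have hself (p : W) : (symEnd Ω p p).rTensor U ∈ curvatureSpan (tensorSum Ω ω) := by
    by_cases hp : Ω p = 0
    · simp [symEnd, hp]
    obtain ⟨q, hpq⟩ : ∃ q, Ω p q ≠ 0 := by
      simpa [LinearMap.ext_iff] using hp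
    have hmem := rTensor_symplecticPart_mem_curvatureSpan hΩ hΩ0 hω hω0 hplane
      (symEnd_mem hΩ p p) p q
    rwa [symplecticPart_symEnd_self hΩ, LinearMap.rTensor_smul,
      Submodule.smul_mem_iff _ hpq] at hmem
  rw [← Submodule.smul_mem_iff _ (two_ne_zero (α := ℂ)), ← LinearMap.rTensor_smul,
    two_smul_symEnd, LinearMap.rTensor_sub, LinearMap.rTensor_sub]
  exact sub_mem (sub_mem (hself _) (hself _)) (hself _)

lemma rTensor_mem_curvatureSpan (hΩ : Ω.IsAlt) (hΩ0 : Ω ≠ 0) (hω : ω.IsAlt) (hω0 : ω ≠ 0)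
    (hplane : IsPlanar ω) {A : Module.End ℂ W} (hA : A ∈ Ω.skewAdjointSubmodule) :
    A.rTensor U ∈ curvatureSpan (tensorSum Ω ω) := by
  obtain ⟨p, q, hpq⟩ := exists_apply_apply_ne_zero hΩ0
  have hsolve : Ω p q • A = symEnd Ω p (A q) - symEnd Ω (A p) q - symplecticPart Ω A p q := by
    rw [symplecticPart_apply, sub_sub_cancel]
  have hsymEnd := rTensor_symEnd_mem_curvatureSpan hΩ hΩ0 hω hω0 hplane
  rw [← Submodule.smul_mem_iff _ hpq, ← LinearMap.rTensor_smul, hsolve, LinearMap.rTensor_sub,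
    LinearMap.rTensor_sub]
  exact sub_mem (sub_mem (hsymEnd _ _) (hsymEnd _ _))
    (rTensor_symplecticPart_mem_curvatureSpan hΩ hΩ0 hω hω0 hplane hA p q)

lemma lTensor_mem_curvatureSpan (hΩ : Ω.IsAlt) (hΩ0 : Ω ≠ 0) (hω : ω.IsAlt) (hω0 : ω ≠ 0)
    (hplane : IsPlanar ω) {C : Module.End ℂ U} (hC : C ∈ ω.skewAdjointSubmodule) :
    C.lTensor W ∈ curvatureSpan (tensorSum Ω ω) := by
  obtain ⟨u, v, huv⟩ := exists_apply_apply_ne_zero hω0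
  have hsymEnd := lTensor_symEnd_mem_curvatureSpan hΩ hΩ0 hω hplane
  rw [← Submodule.smul_mem_iff _ (mul_ne_zero two_ne_zero huv), ← LinearMap.lTensor_smul,
    two_mul_smul_eq_symEnd_sub hω hplane hC, LinearMap.lTensor_sub]
  exact sub_mem (hsymEnd _ _) (hsymEnd _ _)

theorem isSkewBerger_tensorSum (hΩ : Ω.IsAlt) (hΩ0 : Ω ≠ 0) (hω : ω.IsAlt) (hω0 : ω ≠ 0)
    (hplane : IsPlanar ω) : IsSkewBerger (tensorSum Ω ω) := by
  refine isSkewBerger_of_le_curvatureSpan (sup_le ?_ ?_)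
  · exact Submodule.map_le_iff_le_comap.2 fun _ =>
      rTensor_mem_curvatureSpan hΩ hΩ0 hω hω0 hplane
  · exact Submodule.map_le_iff_le_comap.2 fun _ =>
      lTensor_mem_curvatureSpan hΩ hΩ0 hω hω0 hplane

end TensorSum

lemma span_setOf_eq_tensorSum_areaForm {R W : Type*} [CommRing R] [AddCommGroup W] [Module R W]
    (Ω : W →ₗ[R] W →ₗ[R] R) :
    Submodule.span R
      {T : Module.End R (W ⊗[R] (Fin 2 → R)) |
        ∃ A : Module.End R W, ∃ C : Module.End R (Fin 2 → R),
          (∀ x y : W, Ω (A x) y + Ω x (A y) = 0) ∧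
          LinearMap.trace R (Fin 2 → R) C = 0 ∧
          T = TensorProduct.map A LinearMap.id + TensorProduct.map LinearMap.id C} =
      tensorSum Ω (areaForm R) := by
  refine (congrArg (Submodule.span R) ?_).trans (Submodule.span_eq _)
  ext T
  simp only [tensorSum, SetLike.mem_coe, Submodule.mem_sup, Submodule.mem_map,
    exists_exists_and_eq_and, mem_skewAdjointSubmodule_areaForm,
    mem_skewAdjointSubmodule_iff (B := Ω), Set.mem_ofPred_eq, LinearMap.coe_rTensorHom,
    LinearMap.coe_lTensorHom, LinearMap.rTensor, LinearMap.lTensor, exists_and_left,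
    eq_comm (a := T)]

end SkewBerger

open SkewBerger in
theorem stmt5_general {W : Type*} [AddCommGroup W] [Module ℂ W] (Ω : W →ₗ[ℂ] W →ₗ[ℂ] ℂ)
    (hΩalt : ∀ x : W, Ω x x = 0) (hΩ0 : Ω ≠ 0)
    (g : Submodule ℂ (Module.End ℂ (W ⊗[ℂ] (Fin 2 → ℂ))))
    (hg : g = Submodule.span ℂ
      {T : Module.End ℂ (W ⊗[ℂ] (Fin 2 → ℂ)) |
        ∃ A : Module.End ℂ W, ∃ C : Module.End ℂ (Fin 2 → ℂ),
          (∀ x y : W, Ω (A x) y + Ω x (A y) = 0) ∧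
          LinearMap.trace ℂ (Fin 2 → ℂ) C = 0 ∧
          T = TensorProduct.map A LinearMap.id + TensorProduct.map LinearMap.id C}) :
    IsSkewBerger g := by
  rw [hg, span_setOf_eq_tensorSum_areaForm]
  exact isSkewBerger_tensorSum hΩalt hΩ0 isAlt_areaForm areaForm_ne_zero isPlanar_areaForm

/-- for a nondegenerate alternating form `Ω` on a `2m`-dimensional
complex vector space `W` (`m ≥ 1`), the Lie algebra
`sp(Ω) ⊗ id + id ⊗ sl(2,ℂ) ⊆ End(W ⊗ ℂ²)` is a skew-Berger algebra. -/
theorem stmt5 {W : Type*} [AddCommGroup W] [Module ℂ W] [FiniteDimensional ℂ W]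
    (m : ℕ) (hm : 1 ≤ m) (hdim : Module.finrank ℂ W = 2 * m)
    (Ω : W →ₗ[ℂ] W →ₗ[ℂ] ℂ)
    (hΩalt : ∀ x : W, Ω x x = 0)
    (hΩnd : ∀ x : W, (∀ y : W, Ω x y = 0) → x = 0)
    (g : Submodule ℂ (Module.End ℂ (W ⊗[ℂ] (Fin 2 → ℂ))))
    (hg : g = Submodule.span ℂ
      {T : Module.End ℂ (W ⊗[ℂ] (Fin 2 → ℂ)) |
        ∃ A : Module.End ℂ W, ∃ C : Module.End ℂ (Fin 2 → ℂ),
          (∀ x y : W, Ω (A x) y + Ω x (A y) = 0) ∧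
          LinearMap.trace ℂ (Fin 2 → ℂ) C = 0 ∧
          T = TensorProduct.map A LinearMap.id + TensorProduct.map LinearMap.id C}) :
    IsSkewBerger g := by
  have : Nontrivial W := Module.nontrivial_of_finrank_pos (R := ℂ) (by omega)
  obtain ⟨x, hx⟩ := exists_ne (0 : W)
  exact stmt5_general Ω hΩalt (fun hΩ => hx (hΩnd x fun y => by rw [hΩ]; rfl)) g hg
end

section
/- Let n ≥ 3, m ≥ 2, U a complex vector space of dimension n with nondegenerate symmetric bilinear form B, W a complex vector space of dimension 2m with nondegenerate alternating bilinear form Ω, V = U ⊗ W, and 𝔤 = {A ⊗ id_W + id_U ⊗ C : A ∈ so(B), C ∈ sp(Ω)} ⊆ End(V). Then the space 𝓡̄(𝔤) of skew-curvature tensors of type 𝔤 is one-dimensional. -/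
open TensorProduct

/-!
Write `R(x, y) = A(x, y) ⊗ id + id ⊗ C(x, y)` with `A` valued in `so(B)` and `C` in `sp(Ω)`.
Contracting the Bianchi identity with a functional on `W` that kills `w` shows that
`A(u ⊗ w, u ⊗ w)` is a scalar plus a rank one map; being skew, it vanishes. Contracting the identity
at `u ⊗ w, u ⊗ w, v ⊗ w'` with `B u` then leaves
`B(u, v) C(u ⊗ w, u ⊗ w) w' + 2 B(u, u) C(u ⊗ w, v ⊗ w') w = 0`,
so that `C(u ⊗ w, v ⊗ w') w = 0` for `u ⊥ v`. As the first prolongation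
`(W* ⊗ sp(Ω)) ∩ (Λ² W* ⊗ W)` is zero, `C(u ⊗ w, v ⊗ w') = 0` for `u ⊥ v`, which means
`C(u ⊗ w, v ⊗ w') = B(u, v) S(w, w')`. The identity now makes `S(w, w) w'` a multiple of `w`, and
skewness forces that multiple to be proportional to `Ω(w, w')`; so `C` is known up to a scalar, and
the Bianchi identity recovers `A` from `C`.
-/

section BilinearAlgebra

variable {K M N X : Type*} [Field K] [AddCommGroup M] [Module K M] [AddCommGroup N] [Module K N]
  [AddCommGroup X] [Module K X]

lemma exists_apply_eq_smul_of_apply_eq_zero_imp (B : M →ₗ[K] N →ₗ[K] K) (P : M →ₗ[K] N →ₗ[K] X)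
    (h : ∀ x y, B x y = 0 → P x y = 0) : ∃ p : X, ∀ x y, P x y = B x y • p := by
  by_cases hB : B = 0
  · exact ⟨0, fun x y ↦ by rw [h x y (by simp [hB]), smul_zero]⟩
  obtain ⟨x₀, y₀, h₀⟩ : ∃ x y, B x y ≠ 0 := by
    by_contra! hzero
    exact hB (LinearMap.ext₂ hzero)
  have right (x y y') : B x y • P x y' = B x y' • P x y := by
    simpa [sub_eq_zero] using h x (B x y • y' - B x y' • y) (by simp [mul_comm])
  have left (x x' y) : B x y • P x' y = B x' y • P x y := by
    simpa [sub_eq_zero] using h (B x y • x' - B x' y • x) y (by simp [mul_comm])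
  have of_ne_zero (x y) (hx : B x y₀ ≠ 0) : B x₀ y₀ • P x y = B x y • P x₀ y₀ := by
    refine smul_right_injective X hx ?_
    change B x y₀ • B x₀ y₀ • P x y = B x y₀ • B x y • P x₀ y₀
    linear_combination (norm := module) B x₀ y₀ • right x y₀ y + B x y • left x₀ x y₀
  have key (x y) : B x₀ y₀ • P x y = B x y • P x₀ y₀ := by
    by_cases hx : B x y₀ = 0
    · have := of_ne_zero (x + x₀) y (by simpa [hx] using h₀)
      simp only [map_add, LinearMap.add_apply] at this
      linear_combination (norm := module) this - right x₀ y₀ y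
    · exact of_ne_zero x y hx
  refine ⟨(B x₀ y₀)⁻¹ • P x₀ y₀, fun x y ↦ ?_⟩
  rw [smul_comm, ← key, inv_smul_smul₀ h₀]

lemma nontrivial_of_three_le_rank (hM : 3 ≤ Module.rank K M) : Nontrivial M :=
  rank_pos_iff_nontrivial.mp (three_pos.trans_le hM)

lemma exists_dual_apply_eq_one_of_three_le_rank (hM : 3 ≤ Module.rank K M) (x y : M) :
    ∃ (f : Module.Dual K M) (z : M), f x = 0 ∧ f y = 0 ∧ f z = 1 := by
  classical
  have hlt : Submodule.span K {x, y} < ⊤ := by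
    refine lt_top_iff_ne_top.mpr fun htop ↦ ?_
    have hspan := rank_span_finset_le (R := K) ({x, y} : Finset M)
    rw [Finset.coe_pair, htop, rank_top] at hspan
    have hcard : (3 : Cardinal) ≤ (2 : ℕ) :=
      (hM.trans hspan).trans (by exact_mod_cast Finset.card_le_two)
    norm_num at hcard
  obtain ⟨f, hf, hle⟩ := Submodule.exists_le_ker_of_lt_top _ hlt
  obtain ⟨z, hz⟩ : ∃ z, f z ≠ 0 := DFunLike.ne_iff.mp hf
  exact ⟨f, (f z)⁻¹ • z, hle (Submodule.subset_span (by simp)),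
    hle (Submodule.subset_span (by simp)), by simp [hz]⟩

lemma exists_ne_zero_of_three_le_rank (hM : 3 ≤ Module.rank K M) (f g : Module.Dual K M) :
    ∃ x ≠ 0, f x = 0 ∧ g x = 0 := by
  have hker : LinearMap.ker (f.prod g) ≠ ⊥ := by
    intro hbot
    have hle := LinearMap.lift_rank_le_of_injective _ (LinearMap.ker_eq_bot.mp hbot)
    have : (3 : Cardinal) ≤ 2 := by
      simpa [one_add_one_eq_two] using (Cardinal.lift_le.mpr hM).trans hle
    norm_num at this
  obtain ⟨x, hx, hx0⟩ := Submodule.exists_mem_ne_zero_of_ne_bot hker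
  exact ⟨x, hx0, by simpa using hx⟩

lemma exists_apply_self_ne_zero [NeZero (2 : K)] {B : M →ₗ[K] M →ₗ[K] K} (hB : B.IsSymm)
    (hB₀ : B ≠ 0) : ∃ x, B x x ≠ 0 := by
  let := invertibleOfNonzero (two_ne_zero' K)
  exact LinearMap.BilinForm.exists_bilinForm_self_ne_zero hB₀ ⟨hB.eq⟩

lemma ne_zero_of_separatingLeft [Nontrivial M] {B : M →ₗ[K] M →ₗ[K] K} (hB : B.SeparatingLeft) :
    B ≠ 0 := by
  rintro rfl
  obtain ⟨x, hx⟩ := exists_ne (0 : M)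
  exact hx (hB x fun _ ↦ rfl)

end BilinearAlgebra

section SkewAdjoint

variable {K M : Type*} [Field K] [AddCommGroup M] [Module K M] {B : M →ₗ[K] M →ₗ[K] K}
  {T : Module.End K M}

lemma mem_skewAdjointSubmodule_iff_add_eq_zero :
    T ∈ B.skewAdjointSubmodule ↔ ∀ x y, B (T x) y + B x (T y) = 0 := by
  simp [LinearMap.IsSkewAdjoint, LinearMap.IsAdjointPair, eq_neg_iff_add_eq_zero]

variable [NeZero (2 : K)]

lemma apply_apply_self_eq_zero_of_mem_skewAdjoint (hB : B.IsSymm)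
    (hT : T ∈ B.skewAdjointSubmodule) (x : M) : B x (T x) = 0 := by
  have h := mem_skewAdjointSubmodule_iff_add_eq_zero.mp hT x x
  rw [← hB.eq x (T x), RingHom.id_apply, ← two_mul] at h
  simpa [two_ne_zero' K] using h

lemma eq_zero_of_mem_skewAdjoint_of_apply_eq_smul_add (hB : B.IsSymm) (hB' : B.SeparatingLeft)
    (hM : 3 ≤ Module.rank K M) (hT : T ∈ B.skewAdjointSubmodule) {s : K} {φ : Module.Dual K M}
    {u : M} (h : ∀ v, T v = s • v + φ v • u) : T = 0 := by
  have comm (x y) : B x y = B y x := hB.eq x y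
  have skew (x y) : 2 * s * B x y + φ x * B u y + φ y * B u x = 0 := by
    have := mem_skewAdjointSubmodule_iff_add_eq_zero.mp hT x y
    simp only [h, map_add, map_smul, LinearMap.add_apply, LinearMap.smul_apply, smul_eq_mul,
      comm x u] at this
    linear_combination this
  have hs : s = 0 := by
    obtain ⟨v, hv, hφv, huv⟩ := exists_ne_zero_of_three_le_rank hM φ (B u)
    by_contra hs
    refine hv (hB' v fun y ↦ ?_)
    simpa [hφv, huv, hs, two_ne_zero' K] using skew v y
  subst hs
  by_cases hu : u = 0
  · ext v
    simp [h, hu]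
  obtain ⟨y, hy⟩ : ∃ y, B u y ≠ 0 := by
    by_contra! hzero
    exact hu (hB' u hzero)
  have hφy : φ y = 0 := by
    have : 2 * (φ y * B u y) = 0 := by linear_combination skew y y
    simpa [hy, two_ne_zero' K] using this
  ext v
  have hφv : φ v = 0 := by simpa [hφy, hy] using skew v y
  simp [h, hφv]

-- Such an `L` gives `F(x, y, z) = B (L x y) z`, antisymmetric in `x, y` and symmetric in `y, z`.
lemma eq_zero_of_mem_skewAdjoint_of_apply_self_eq_zero (hB : B.IsAlt) (hB' : B.SeparatingLeft)
    {L : M →ₗ[K] Module.End K M} (hL : ∀ x, L x ∈ B.skewAdjointSubmodule) (hL₀ : ∀ x, L x x = 0) :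
    L = 0 := by
  have antisymm (x y z) : B (L x y) z = -B (L y x) z := by
    have : L (x + y) (x + y) = 0 := hL₀ _
    simp only [map_add, LinearMap.add_apply, hL₀, zero_add, add_zero] at this
    rw [eq_neg_of_add_eq_zero_right this, map_neg, LinearMap.neg_apply]
  have symm (x y z) : B (L x y) z = B (L x z) y := by
    have := mem_skewAdjointSubmodule_iff_add_eq_zero.mp (hL x) y z
    rw [← hB.neg (L x z) y] at this
    linear_combination this
  ext x y
  refine hB' _ fun z ↦ ?_
  have : 2 * B (L x y) z = 0 := by
    linear_combination antisymm x y z - symm y x z - antisymm y z x + symm z y x +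
      antisymm z x y - symm x z y
  simpa [two_ne_zero' K] using this

end SkewAdjoint

section RankOne

variable {K M : Type*} [Field K] [AddCommGroup M] [Module K M]

/-- The rank one endomorphisms `x ↦ B(a, x) b`, as a bilinear map in `a` and `b`. -/
def rankOneEnd (B : M →ₗ[K] M →ₗ[K] K) : M →ₗ[K] M →ₗ[K] Module.End K M :=
  LinearMap.smulRightₗ ∘ₗ B

/-- The map `Λ² M → so(B)` for a symmetric form `B`: `a ∧ b` acts by `x ↦ B(b, x) a - B(a, x) b`. -/
def wedgeEnd (B : M →ₗ[K] M →ₗ[K] K) : M →ₗ[K] M →ₗ[K] Module.End K M :=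
  (rankOneEnd B).flip - rankOneEnd B

/-- The map `S² M → sp(Ω)` for an alternating form `Ω`: `a b` acts by
`x ↦ Ω(a, x) b + Ω(b, x) a`. -/
def symmProdEnd (Ω : M →ₗ[K] M →ₗ[K] K) : M →ₗ[K] M →ₗ[K] Module.End K M :=
  rankOneEnd Ω + (rankOneEnd Ω).flip

lemma wedgeEnd_apply (B : M →ₗ[K] M →ₗ[K] K) (a b x : M) :
    wedgeEnd B a b x = B b x • a - B a x • b :=
  rfl

lemma symmProdEnd_apply (Ω : M →ₗ[K] M →ₗ[K] K) (a b x : M) :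
    symmProdEnd Ω a b x = Ω a x • b + Ω b x • a :=
  rfl

lemma wedgeEnd_swap (B : M →ₗ[K] M →ₗ[K] K) (a b : M) : wedgeEnd B b a = -wedgeEnd B a b := by
  ext x
  simp [wedgeEnd_apply]

lemma symmProdEnd_comm (Ω : M →ₗ[K] M →ₗ[K] K) (a b : M) :
    symmProdEnd Ω a b = symmProdEnd Ω b a := by
  ext x
  simp [symmProdEnd_apply, add_comm]

lemma wedgeEnd_mem_skewAdjoint {B : M →ₗ[K] M →ₗ[K] K} (hB : B.IsSymm) (a b : M) :
    wedgeEnd B a b ∈ B.skewAdjointSubmodule := by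
  refine mem_skewAdjointSubmodule_iff_add_eq_zero.mpr fun x y ↦ ?_
  have comm (c) : B x c = B c x := hB.eq x c
  simp only [wedgeEnd_apply, map_sub, map_smul, LinearMap.sub_apply, LinearMap.smul_apply,
    smul_eq_mul, comm]
  ring

lemma symmProdEnd_mem_skewAdjoint {Ω : M →ₗ[K] M →ₗ[K] K} (hΩ : Ω.IsAlt) (a b : M) :
    symmProdEnd Ω a b ∈ Ω.skewAdjointSubmodule := by
  refine mem_skewAdjointSubmodule_iff_add_eq_zero.mpr fun x y ↦ ?_
  simp only [symmProdEnd_apply, map_add, map_smul, LinearMap.add_apply, LinearMap.smul_apply,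
    smul_eq_mul, ← hΩ.neg x]
  ring

lemma exists_eq_smul_symmProdEnd [NeZero (2 : K)] {Ω : M →ₗ[K] M →ₗ[K] K} (hΩ : Ω.IsAlt)
    (hΩ' : Ω.SeparatingLeft) {S : M →ₗ[K] M →ₗ[K] Module.End K M} (hS : ∀ x y, S x y = S y x)
    (hS' : ∀ x, S x x ∈ Ω.skewAdjointSubmodule) {c : M →ₗ[K] M →ₗ[K] K}
    (hc : ∀ x y, S x x y = c x y • x) : ∃ κ : K, ∀ x y, S x y = κ • symmProdEnd Ω x y := by
  have c_eq_zero (x y) (hxy : Ω x y = 0) : c x y = 0 := by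
    by_cases hx : x = 0
    · simp [hx]
    obtain ⟨z, hz⟩ : ∃ z, Ω x z ≠ 0 := by
      by_contra! hzero
      exact hx (hΩ' x hzero)
    have hyx : Ω y x = 0 := hΩ.isRefl x y hxy
    simpa [hc, hyx, hz] using mem_skewAdjointSubmodule_iff_add_eq_zero.mp (hS' x) y z
  obtain ⟨κ, hκ⟩ := exists_apply_eq_smul_of_apply_eq_zero_imp Ω c c_eq_zero
  refine ⟨2⁻¹ * κ, fun x y ↦ ?_⟩
  ext z
  have polarized : (2 : K) • S x y z = κ • symmProdEnd Ω x y z := by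
    have := hc (x + y) z
    simp only [map_add, LinearMap.add_apply, hc, hκ, hS y x, smul_eq_mul] at this
    rw [symmProdEnd_apply]
    linear_combination (norm := module) this
  rw [LinearMap.smul_apply, mul_smul, ← polarized, inv_smul_smul₀ (two_ne_zero' K)]

end RankOne

section SkewCurvatureTensor

variable {K V : Type*} [Field K] [AddCommGroup V] [Module K V]

/-- Skew-curvature tensors of type `𝔤` over an arbitrary field; `IsSkewCurv` is the complex case. -/
def IsSkewCurvatureTensor (𝔤 : Submodule K (Module.End K V))
    (R : V →ₗ[K] V →ₗ[K] Module.End K V) : Prop :=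
  (∀ x y, R x y = R y x) ∧ (∀ x y, R x y ∈ 𝔤) ∧ ∀ x y z, R x y z + R y z x + R z x y = 0

lemma bianchi_of_span_eq_top {R : V →ₗ[K] V →ₗ[K] Module.End K V} {s : Set V}
    (hs : Submodule.span K s = ⊤)
    (h : ∀ x ∈ s, ∀ y ∈ s, ∀ z ∈ s, R x y z + R y z x + R z x y = 0) (x y z : V) :
    R x y z + R y z x + R z x y = 0 := by
  have extend {y z : V} (hyz : ∀ x ∈ s, R x y z + R y z x + R z x y = 0) (x : V) :
      R x y z + R y z x + R z x y = 0 := by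
    have hzero : (R.flip y).flip z + R y z + (R z).flip y = 0 := LinearMap.ext_on hs hyz
    exact DFunLike.congr_fun hzero x
  have cycle (x y z : V) : R x y z + R y z x + R z x y = R y z x + R z x y + R x y z := by abel
  refine extend (fun x hx ↦ ?_) x
  rw [cycle]
  refine extend (fun y hy ↦ ?_) y
  rw [cycle]
  refine extend (fun z hz ↦ ?_) z
  rw [cycle]
  exact h x hx y hy z hz

lemma isSkewCurvatureTensor_of_span_eq_top {𝔤 : Submodule K (Module.End K V)}
    {R : V →ₗ[K] V →ₗ[K] Module.End K V} {s : Set V} (hs : Submodule.span K s = ⊤)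
    (symm : ∀ x ∈ s, ∀ y ∈ s, R x y = R y x) (mem : ∀ x ∈ s, ∀ y ∈ s, R x y ∈ 𝔤)
    (bianchi : ∀ x ∈ s, ∀ y ∈ s, ∀ z ∈ s, R x y z + R y z x + R z x y = 0) :
    IsSkewCurvatureTensor 𝔤 R := by
  refine ⟨fun x y ↦ ?_, fun x y ↦ ?_, bianchi_of_span_eq_top hs bianchi⟩
  · have hflip : R = R.flip :=
      LinearMap.ext_on hs fun x hx ↦ LinearMap.ext_on hs fun y hy ↦ symm x hx y hy
    exact LinearMap.congr_fun₂ hflip x y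
  · have hzero : R.compr₂ 𝔤.mkQ = 0 := by
      refine LinearMap.ext_on hs fun x hx ↦ LinearMap.ext_on hs fun y hy ↦ ?_
      exact (Submodule.Quotient.mk_eq_zero 𝔤).mpr (mem x hx y hy)
    exact (Submodule.Quotient.mk_eq_zero 𝔤).mp (LinearMap.congr_fun₂ hzero x y)

end SkewCurvatureTensor

section TensorProductAlgebra

variable {K U W : Type*} [Field K] [AddCommGroup U] [Module K U] [AddCommGroup W] [Module K W]

/-- The map `so(B) ⊕ sp(Ω) → End(U ⊗ W)`, `(A, C) ↦ A ⊗ id + id ⊗ C`. -/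
noncomputable def soSpHom (B : U →ₗ[K] U →ₗ[K] K) (Ω : W →ₗ[K] W →ₗ[K] K) :
    B.skewAdjointSubmodule × Ω.skewAdjointSubmodule →ₗ[K] Module.End K (U ⊗[K] W) :=
  (LinearMap.rTensorHom W ∘ₗ B.skewAdjointSubmodule.subtype).coprod
    (LinearMap.lTensorHom U ∘ₗ Ω.skewAdjointSubmodule.subtype)

/-- The Lie algebra `𝔤 = so(B) ⊗ id + id ⊗ sp(Ω)`, as a subspace of `End(U ⊗ W)`. -/
noncomputable def soSp (B : U →ₗ[K] U →ₗ[K] K) (Ω : W →ₗ[K] W →ₗ[K] K) :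
    Submodule K (Module.End K (U ⊗[K] W)) :=
  LinearMap.range (soSpHom B Ω)

variable {B : U →ₗ[K] U →ₗ[K] K} {Ω : W →ₗ[K] W →ₗ[K] K}

lemma soSpHom_apply_tmul (p : B.skewAdjointSubmodule × Ω.skewAdjointSubmodule) (u : U) (w : W) :
    soSpHom B Ω p (u ⊗ₜ w) = p.1.1 u ⊗ₜ w + u ⊗ₜ p.2.1 w := by
  simp [soSpHom]

lemma span_eq_soSp (B : U →ₗ[K] U →ₗ[K] K) (Ω : W →ₗ[K] W →ₗ[K] K) :
    Submodule.span K {T : Module.End K (U ⊗[K] W) |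
      ∃ A : Module.End K U, ∃ C : Module.End K W,
        (∀ x y : U, B (A x) y + B x (A y) = 0) ∧ (∀ x y : W, Ω (C x) y + Ω x (C y) = 0) ∧
        T = TensorProduct.map A LinearMap.id + TensorProduct.map LinearMap.id C} = soSp B Ω := by
  convert Submodule.span_eq (soSp B Ω)
  ext T
  constructor
  · rintro ⟨A, C, hA, hC, rfl⟩
    exact ⟨(⟨A, mem_skewAdjointSubmodule_iff_add_eq_zero.mpr hA⟩,
      ⟨C, mem_skewAdjointSubmodule_iff_add_eq_zero.mpr hC⟩), rfl⟩
  · rintro ⟨⟨A, C⟩, rfl⟩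
    exact ⟨A, C, mem_skewAdjointSubmodule_iff_add_eq_zero.mp A.2,
      mem_skewAdjointSubmodule_iff_add_eq_zero.mp C.2, rfl⟩

lemma ker_soSpHom_eq_bot [NeZero (2 : K)] [Nontrivial W] (hB : B.IsSymm) (hB₀ : B ≠ 0) :
    LinearMap.ker (soSpHom B Ω) = ⊥ := by
  refine LinearMap.ker_eq_bot'.mpr ?_
  rintro ⟨A, C⟩ hAC
  have apply_eq_zero (u w) : A.1 u ⊗ₜ[K] w + u ⊗ₜ[K] C.1 w = 0 := by
    simpa [soSpHom_apply_tmul] using LinearMap.congr_fun hAC (u ⊗ₜ w)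
  have hC : C = 0 := by
    obtain ⟨u, hu⟩ := exists_apply_self_ne_zero hB hB₀
    ext w
    have := congrArg (fun t ↦ TensorProduct.lid K W ((B u).rTensor W t)) (apply_eq_zero u w)
    simpa [apply_apply_self_eq_zero_of_mem_skewAdjoint hB A.2, hu] using this
  obtain ⟨w, hw⟩ := exists_ne (0 : W)
  obtain ⟨g, hg⟩ := Module.Projective.exists_dual_ne_zero K hw
  have hA : A = 0 := by
    ext u
    have := congrArg (fun t ↦ TensorProduct.rid K U (g.lTensor U t)) (apply_eq_zero u w)
    simpa [hC, hg] using this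
  rw [hA, hC, Prod.mk_zero_zero]

end TensorProductAlgebra

section StandardTensor

variable {K U W : Type*} [Field K] [AddCommGroup U] [Module K U] [AddCommGroup W] [Module K W]

/-- The skew-curvature tensor
`(u₁ ⊗ w₁, u₂ ⊗ w₂) ↦ Ω(w₁, w₂) (u₁ ∧ u₂) ⊗ id + B(u₁, u₂) id ⊗ (w₁ w₂)`, which spans the space
of skew-curvature tensors of type `soSp B Ω`. -/
noncomputable def stdSkewCurvature (B : U →ₗ[K] U →ₗ[K] K) (Ω : W →ₗ[K] W →ₗ[K] K) :
    (U ⊗[K] W) →ₗ[K] (U ⊗[K] W) →ₗ[K] Module.End K (U ⊗[K] W) :=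
  (TensorProduct.map₂ (wedgeEnd B) (Ω.compr₂ (Algebra.linearMap K (Module.End K W))) +
    TensorProduct.map₂ (B.compr₂ (Algebra.linearMap K (Module.End K U))) (symmProdEnd Ω)).compr₂
      (TensorProduct.homTensorHomMap (RingHom.id K) U W U W)

lemma stdSkewCurvature_tmul (B : U →ₗ[K] U →ₗ[K] K) (Ω : W →ₗ[K] W →ₗ[K] K)
    (u₁ u₂ : U) (w₁ w₂ : W) :
    stdSkewCurvature B Ω (u₁ ⊗ₜ w₁) (u₂ ⊗ₜ w₂) =
      (Ω w₁ w₂ • wedgeEnd B u₁ u₂).rTensor W + (B u₁ u₂ • symmProdEnd Ω w₁ w₂).lTensor U := by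
  ext u w
  simp [stdSkewCurvature, TensorProduct.smul_tmul']

variable {B : U →ₗ[K] U →ₗ[K] K} {Ω : W →ₗ[K] W →ₗ[K] K}

lemma isSkewCurvatureTensor_stdSkewCurvature (hB : B.IsSymm) (hΩ : Ω.IsAlt) :
    IsSkewCurvatureTensor (soSp B Ω) (stdSkewCurvature B Ω) := by
  have commB (x y) : B x y = B y x := hB.eq x y
  refine isSkewCurvatureTensor_of_span_eq_top (TensorProduct.span_tmul_eq_top K U W) ?_ ?_ ?_
  · rintro _ ⟨u₁, w₁, rfl⟩ _ ⟨u₂, w₂, rfl⟩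
    rw [stdSkewCurvature_tmul, stdSkewCurvature_tmul, ← hΩ.neg w₁, commB u₂, wedgeEnd_swap B u₁,
      symmProdEnd_comm Ω w₂, neg_smul_neg]
  · rintro _ ⟨u₁, w₁, rfl⟩ _ ⟨u₂, w₂, rfl⟩
    rw [stdSkewCurvature_tmul]
    exact ⟨(⟨_, Submodule.smul_mem _ _ (wedgeEnd_mem_skewAdjoint hB u₁ u₂)⟩,
      ⟨_, Submodule.smul_mem _ _ (symmProdEnd_mem_skewAdjoint hΩ w₁ w₂)⟩), rfl⟩
  · rintro _ ⟨u₁, w₁, rfl⟩ _ ⟨u₂, w₂, rfl⟩ _ ⟨u₃, w₃, rfl⟩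
    simp only [stdSkewCurvature_tmul, LinearMap.add_apply, LinearMap.rTensor_tmul,
      LinearMap.lTensor_tmul, LinearMap.smul_apply, wedgeEnd_apply, symmProdEnd_apply,
      TensorProduct.tmul_add, TensorProduct.sub_tmul, TensorProduct.tmul_smul,
      ← TensorProduct.smul_tmul', smul_sub, smul_add]
    rw [commB u₃ u₁, commB u₃ u₂, commB u₂ u₁, ← hΩ.neg w₁ w₃, ← hΩ.neg w₂ w₃, ← hΩ.neg w₁ w₂]
    module

lemma stdSkewCurvature_ne_zero [NeZero (2 : K)] (hB : B.IsSymm) (hB₀ : B ≠ 0) (hΩ₀ : Ω ≠ 0) :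
    stdSkewCurvature B Ω ≠ 0 := by
  intro hzero
  obtain ⟨u, hu⟩ := exists_apply_self_ne_zero hB hB₀
  obtain ⟨w, hw⟩ : ∃ w, Ω w ≠ 0 := DFunLike.ne_iff.mp hΩ₀
  obtain ⟨w', hw'⟩ : ∃ w', Ω w w' ≠ 0 := DFunLike.ne_iff.mp hw
  have hw_zero : w = 0 := by
    have := congrArg (fun R ↦ TensorProduct.lid K W
      ((B u).rTensor W (R (u ⊗ₜ w) (u ⊗ₜ w) (u ⊗ₜ w')))) hzero
    simpa [stdSkewCurvature_tmul, wedgeEnd_apply, symmProdEnd_apply, ← two_smul K, hu, hw',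
      two_ne_zero' K] using this
  exact hw (by rw [hw_zero, map_zero])

end StandardTensor

section Components

variable {K U W : Type*} [Field K] [AddCommGroup U] [Module K U] [AddCommGroup W] [Module K W]

/-- The components of a skew-curvature tensor `R(x, y) = A(x, y) ⊗ id + id ⊗ C(x, y)` of type
`soSp B Ω`, with the Bianchi identity spelled out on pure tensors. -/
structure IsSkewCurvaturePair (B : U →ₗ[K] U →ₗ[K] K) (Ω : W →ₗ[K] W →ₗ[K] K)
    (A : (U ⊗[K] W) →ₗ[K] (U ⊗[K] W) →ₗ[K] Module.End K U)
    (C : (U ⊗[K] W) →ₗ[K] (U ⊗[K] W) →ₗ[K] Module.End K W) : Prop where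
  symm_left : ∀ x y, A x y = A y x
  symm_right : ∀ x y, C x y = C y x
  mem_left : ∀ x y, A x y ∈ B.skewAdjointSubmodule
  mem_right : ∀ x y, C x y ∈ Ω.skewAdjointSubmodule
  bianchi : ∀ (u₁ u₂ u₃ : U) (w₁ w₂ w₃ : W),
    A (u₁ ⊗ₜ w₁) (u₂ ⊗ₜ w₂) u₃ ⊗ₜ[K] w₃ + u₃ ⊗ₜ[K] C (u₁ ⊗ₜ w₁) (u₂ ⊗ₜ w₂) w₃ +
    (A (u₂ ⊗ₜ w₂) (u₃ ⊗ₜ w₃) u₁ ⊗ₜ[K] w₁ + u₁ ⊗ₜ[K] C (u₂ ⊗ₜ w₂) (u₃ ⊗ₜ w₃) w₁) +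
    (A (u₃ ⊗ₜ w₃) (u₁ ⊗ₜ w₁) u₂ ⊗ₜ[K] w₂ + u₂ ⊗ₜ[K] C (u₃ ⊗ₜ w₃) (u₁ ⊗ₜ w₁) w₂) = 0

variable {B : U →ₗ[K] U →ₗ[K] K} {Ω : W →ₗ[K] W →ₗ[K] K}

lemma IsSkewCurvatureTensor.exists_isSkewCurvaturePair [NeZero (2 : K)] [Nontrivial W]
    (hB : B.IsSymm) (hB₀ : B ≠ 0) {R : (U ⊗[K] W) →ₗ[K] (U ⊗[K] W) →ₗ[K] Module.End K (U ⊗[K] W)}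
    (hR : IsSkewCurvatureTensor (soSp B Ω) R) :
    ∃ A C, IsSkewCurvaturePair B Ω A C ∧ ∀ x y, R x y = (A x y).rTensor W + (C x y).lTensor U := by
  obtain ⟨symm, mem, bianchi⟩ := hR
  obtain ⟨proj, hproj⟩ :=
    (soSpHom B Ω).exists_leftInverse_of_injective (ker_soSpHom_eq_bot hB hB₀)
  have soSpHom_proj (x y) : soSpHom B Ω (proj (R x y)) = R x y := by
    obtain ⟨p, hp⟩ := mem x y
    rw [← hp, ← LinearMap.comp_apply proj, hproj, LinearMap.id_apply]
  refine ⟨R.compr₂ (B.skewAdjointSubmodule.subtype ∘ₗ .fst _ _ _ ∘ₗ proj),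
    R.compr₂ (Ω.skewAdjointSubmodule.subtype ∘ₗ .snd _ _ _ ∘ₗ proj),
    ⟨fun x y ↦ ?_, fun x y ↦ ?_, fun x y ↦ ?_, fun x y ↦ ?_, fun u₁ u₂ u₃ w₁ w₂ w₃ ↦ ?_⟩,
    fun x y ↦ (soSpHom_proj x y).symm⟩
  · rw [LinearMap.compr₂_apply, symm, LinearMap.compr₂_apply]
  · rw [LinearMap.compr₂_apply, symm, LinearMap.compr₂_apply]
  · exact (proj (R x y)).1.2
  · exact (proj (R x y)).2.2
  · have := bianchi (u₁ ⊗ₜ w₁) (u₂ ⊗ₜ w₂) (u₃ ⊗ₜ w₃)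
    rwa [← soSpHom_proj (u₁ ⊗ₜ w₁), ← soSpHom_proj (u₂ ⊗ₜ w₂), ← soSpHom_proj (u₃ ⊗ₜ w₃),
      soSpHom_apply_tmul, soSpHom_apply_tmul, soSpHom_apply_tmul] at this

namespace IsSkewCurvaturePair

variable {A : (U ⊗[K] W) →ₗ[K] (U ⊗[K] W) →ₗ[K] Module.End K U}
  {C : (U ⊗[K] W) →ₗ[K] (U ⊗[K] W) →ₗ[K] Module.End K W}

lemma contract_left (h : IsSkewCurvaturePair B Ω A C) (f : Module.Dual K U)
    (u₁ u₂ u₃ : U) (w₁ w₂ w₃ : W) :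
    f (A (u₁ ⊗ₜ w₁) (u₂ ⊗ₜ w₂) u₃) • w₃ + f u₃ • C (u₁ ⊗ₜ w₁) (u₂ ⊗ₜ w₂) w₃ +
    (f (A (u₂ ⊗ₜ w₂) (u₃ ⊗ₜ w₃) u₁) • w₁ + f u₁ • C (u₂ ⊗ₜ w₂) (u₃ ⊗ₜ w₃) w₁) +
    (f (A (u₃ ⊗ₜ w₃) (u₁ ⊗ₜ w₁) u₂) • w₂ + f u₂ • C (u₃ ⊗ₜ w₃) (u₁ ⊗ₜ w₁) w₂) = 0 := by
  simpa using congrArg (fun t ↦ TensorProduct.lid K W (f.rTensor W t)) (h.bianchi u₁ u₂ u₃ w₁ w₂ w₃)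

lemma contract_right (h : IsSkewCurvaturePair B Ω A C) (g : Module.Dual K W)
    (u₁ u₂ u₃ : U) (w₁ w₂ w₃ : W) :
    g w₃ • A (u₁ ⊗ₜ w₁) (u₂ ⊗ₜ w₂) u₃ + g (C (u₁ ⊗ₜ w₁) (u₂ ⊗ₜ w₂) w₃) • u₃ +
    (g w₁ • A (u₂ ⊗ₜ w₂) (u₃ ⊗ₜ w₃) u₁ + g (C (u₂ ⊗ₜ w₂) (u₃ ⊗ₜ w₃) w₁) • u₁) +
    (g w₂ • A (u₃ ⊗ₜ w₃) (u₁ ⊗ₜ w₁) u₂ + g (C (u₃ ⊗ₜ w₃) (u₁ ⊗ₜ w₁) w₂) • u₂) = 0 := by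
  simpa using congrArg (fun t ↦ TensorProduct.rid K U (g.lTensor U t)) (h.bianchi u₁ u₂ u₃ w₁ w₂ w₃)

lemma left_tmul_eq_smul_wedgeEnd (h : IsSkewCurvaturePair B Ω A C) (hB : B.IsSymm)
    (hΩ : Ω.IsAlt) (hW : 3 ≤ Module.rank K W)
    {κ : K} (hC : ∀ u v w w', C (u ⊗ₜ w) (v ⊗ₜ w') = κ • B u v • symmProdEnd Ω w w')
    (u v : U) (w w' : W) : A (u ⊗ₜ w) (v ⊗ₜ w') = κ • Ω w w' • wedgeEnd B u v := by
  obtain ⟨g, y, hgw, hgw', hgy⟩ := exists_dual_apply_eq_one_of_three_le_rank hW w w'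
  ext x
  have comm : B x u = B u x := hB.eq x u
  have := h.contract_right g u v x w w' y
  simp only [hC, LinearMap.smul_apply, symmProdEnd_apply, map_smul, map_add, hgw, hgw', hgy,
    ← hΩ.neg w w', comm] at this
  simp only [LinearMap.smul_apply, wedgeEnd_apply]
  linear_combination (norm := module) this

variable [NeZero (2 : K)]

lemma left_tmul_self (h : IsSkewCurvaturePair B Ω A C) (hB : B.IsSymm) (hB' : B.SeparatingLeft)
    (hU : 3 ≤ Module.rank K U) (hW : 3 ≤ Module.rank K W) (u : U) (w : W) :
    A (u ⊗ₜ w) (u ⊗ₜ w) = 0 := by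
  obtain ⟨g, w', hgw, -, hgw'⟩ := exists_dual_apply_eq_one_of_three_le_rank hW w w
  let φ : Module.Dual K U :=
    (-2 : K) • g ∘ₗ LinearMap.applyₗ w ∘ₗ C (u ⊗ₜ w) ∘ₗ (TensorProduct.mk K U W).flip w'
  refine eq_zero_of_mem_skewAdjoint_of_apply_eq_smul_add hB hB' hU (h.mem_left _ _)
    (s := -g (C (u ⊗ₜ w) (u ⊗ₜ w) w')) (φ := φ) (u := u) fun v ↦ ?_
  have hφ : φ v = -2 * g (C (u ⊗ₜ w) (v ⊗ₜ w') w) := rfl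
  have := h.contract_right g u u v w w w'
  rw [h.symm_right (v ⊗ₜ w') (u ⊗ₜ w), hgw, hgw'] at this
  rw [hφ]
  linear_combination (norm := module) this

lemma contract_left_tmul_self (h : IsSkewCurvaturePair B Ω A C) (hB : B.IsSymm)
    (hB' : B.SeparatingLeft) (hU : 3 ≤ Module.rank K U) (hW : 3 ≤ Module.rank K W)
    (f : Module.Dual K U) (u v : U) (w w' : W) :
    (2 * f (A (u ⊗ₜ w) (v ⊗ₜ w') u)) • w + f v • C (u ⊗ₜ w) (u ⊗ₜ w) w' +
      (2 * f u) • C (u ⊗ₜ w) (v ⊗ₜ w') w = 0 := by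
  have := h.contract_left f u u v w w w'
  rw [h.symm_right (v ⊗ₜ w') (u ⊗ₜ w), h.symm_left (v ⊗ₜ w') (u ⊗ₜ w),
    h.left_tmul_self hB hB' hU hW, LinearMap.zero_apply, map_zero, zero_smul, zero_add] at this
  linear_combination (norm := module) this

lemma smul_right_tmul_self_add (h : IsSkewCurvaturePair B Ω A C) (hB : B.IsSymm)
    (hB' : B.SeparatingLeft) (hU : 3 ≤ Module.rank K U) (hW : 3 ≤ Module.rank K W)
    (u v : U) (w w' : W) :
    B u v • C (u ⊗ₜ w) (u ⊗ₜ w) w' + (2 * B u u) • C (u ⊗ₜ w) (v ⊗ₜ w') w = 0 := by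
  simpa [apply_apply_self_eq_zero_of_mem_skewAdjoint hB (h.mem_left _ _)] using
    h.contract_left_tmul_self hB hB' hU hW (B u) u v w w'

lemma right_tmul_apply_eq_zero_of_isOrtho (h : IsSkewCurvaturePair B Ω A C) (hB : B.IsSymm)
    (hB' : B.SeparatingLeft) (hU : 3 ≤ Module.rank K U) (hW : 3 ≤ Module.rank K W)
    {u v : U} (huv : B u v = 0) (w w' : W) : C (u ⊗ₜ w) (v ⊗ₜ w') w = 0 := by
  have identity (x) := h.smul_right_tmul_self_add hB hB' hU hW x v w w'
  by_cases huu : B u u = 0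
  swap
  · simpa [huv, huu, two_ne_zero' K] using identity u
  by_cases hu : u = 0
  · simp [hu]
  obtain ⟨z, hz⟩ : ∃ z, B u z ≠ 0 := by
    by_contra! hzero
    exact hu (hB' u hzero)
  have hQ : C (u ⊗ₜ w) (u ⊗ₜ w) w' = 0 := by
    simpa [huu, hz] using h.smul_right_tmul_self_add hB hB' hU hW u z w w'
  -- The part of the cubic identity at `u + t z` that is linear in `t`, read off from `t = 1, -1`.
  have hlinear : (2 * 2 * (2 * B u z)) • C (u ⊗ₜ w) (v ⊗ₜ w') w = 0 := by
    have comm : B z u = B u z := hB.eq z u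
    have hplus := identity (u + z)
    have hminus := identity (u - z)
    simp only [TensorProduct.add_tmul, TensorProduct.sub_tmul, map_add, map_sub,
      LinearMap.add_apply, LinearMap.sub_apply, huv, huu, hQ, comm,
      h.symm_right (z ⊗ₜ w) (u ⊗ₜ w)] at hplus hminus
    linear_combination (norm := module) hplus - hminus - (2 : K) • identity z
  simpa [hz, two_ne_zero' K] using hlinear

lemma right_tmul_eq_zero_of_isOrtho (h : IsSkewCurvaturePair B Ω A C) (hB : B.IsSymm)
    (hB' : B.SeparatingLeft) (hΩ : Ω.IsAlt) (hΩ' : Ω.SeparatingLeft) (hU : 3 ≤ Module.rank K U)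
    (hW : 3 ≤ Module.rank K W) {u v : U} (huv : B u v = 0) (w w' : W) :
    C (u ⊗ₜ w) (v ⊗ₜ w') = 0 := by
  have hvu : B v u = 0 := hB.isRefl u v huv
  have hzero : C (u ⊗ₜ w) ∘ₗ TensorProduct.mk K U W v = 0 :=
    eq_zero_of_mem_skewAdjoint_of_apply_self_eq_zero hΩ hΩ' (fun x ↦ h.mem_right _ _) fun x ↦ by
      rw [LinearMap.comp_apply, TensorProduct.mk_apply, h.symm_right]
      exact h.right_tmul_apply_eq_zero_of_isOrtho hB hB' hU hW hvu x w
  exact LinearMap.congr_fun hzero w'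

lemma exists_right_tmul_eq_smul (h : IsSkewCurvaturePair B Ω A C) (hB : B.IsSymm)
    (hB' : B.SeparatingLeft) (hΩ : Ω.IsAlt) (hΩ' : Ω.SeparatingLeft) (hU : 3 ≤ Module.rank K U)
    (hW : 3 ≤ Module.rank K W) :
    ∃ S : W →ₗ[K] W →ₗ[K] Module.End K W,
      ∀ u v w w', C (u ⊗ₜ w) (v ⊗ₜ w') = B u v • S w w' := by
  let P : U →ₗ[K] U →ₗ[K] W →ₗ[K] W →ₗ[K] Module.End K W := LinearMap.mk₂ K
    (fun u v ↦ C.compl₁₂ (TensorProduct.mk K U W u) (TensorProduct.mk K U W v))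
    (fun _ _ _ ↦ by ext; simp) (fun _ _ _ ↦ by ext; simp)
    (fun _ _ _ ↦ by ext; simp) (fun _ _ _ ↦ by ext; simp)
  have hP (u v) (huv : B u v = 0) : P u v = 0 :=
    LinearMap.ext₂ fun w w' ↦ h.right_tmul_eq_zero_of_isOrtho hB hB' hΩ hΩ' hU hW huv w w'
  obtain ⟨S, hS⟩ :=
    exists_apply_eq_smul_of_apply_eq_zero_imp (X := W →ₗ[K] W →ₗ[K] Module.End K W) B P hP
  exact ⟨S, fun u v w w' ↦ LinearMap.congr_fun₂ (hS u v) w w'⟩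

lemma exists_self_apply_eq_smul (h : IsSkewCurvaturePair B Ω A C) (hB : B.IsSymm)
    (hB' : B.SeparatingLeft) (hU : 3 ≤ Module.rank K U) (hW : 3 ≤ Module.rank K W)
    {S : W →ₗ[K] W →ₗ[K] Module.End K W}
    (hS : ∀ u v w w', C (u ⊗ₜ w) (v ⊗ₜ w') = B u v • S w w') {u : U} (hu : B u u ≠ 0) :
    ∃ c : W →ₗ[K] W →ₗ[K] K, ∀ w w', S w w w' = c w w' • w := by
  obtain ⟨f, v, hfu, -, hfv⟩ := exists_dual_apply_eq_one_of_three_le_rank hU u u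
  let a : W →ₗ[K] W →ₗ[K] K := (A.compl₁₂ (TensorProduct.mk K U W u)
    (TensorProduct.mk K U W v)).compr₂ (f ∘ₗ LinearMap.applyₗ u)
  refine ⟨(B u u)⁻¹ • (-2 : K) • a, fun w w' ↦ ?_⟩
  have ha : a w w' = f (A (u ⊗ₜ w) (v ⊗ₜ w') u) := rfl
  have := h.contract_left_tmul_self hB hB' hU hW f u v w w'
  rw [hfu, hfv, hS, LinearMap.smul_apply, ← ha] at this
  rw [LinearMap.smul_apply, LinearMap.smul_apply, smul_assoc, eq_inv_smul_iff₀ hu,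
    LinearMap.smul_apply, LinearMap.smul_apply]
  linear_combination (norm := module) this

lemma exists_right_tmul_eq_smul_symmProdEnd (h : IsSkewCurvaturePair B Ω A C) (hB : B.IsSymm)
    (hB' : B.SeparatingLeft) (hΩ : Ω.IsAlt) (hΩ' : Ω.SeparatingLeft)
    (hU : 3 ≤ Module.rank K U) (hW : 3 ≤ Module.rank K W) :
    ∃ κ : K, ∀ u v w w', C (u ⊗ₜ w) (v ⊗ₜ w') = κ • B u v • symmProdEnd Ω w w' := by
  obtain ⟨S, hS⟩ := h.exists_right_tmul_eq_smul hB hB' hΩ hΩ' hU hW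
  have := nontrivial_of_three_le_rank hU
  obtain ⟨u₀, hu₀⟩ := exists_apply_self_ne_zero hB (ne_zero_of_separatingLeft hB')
  obtain ⟨c, hc⟩ := h.exists_self_apply_eq_smul hB hB' hU hW hS hu₀
  have symm (w w') : S w w' = S w' w := by
    refine smul_right_injective _ hu₀ ?_
    simpa [hS] using h.symm_right (u₀ ⊗ₜ w) (u₀ ⊗ₜ w')
  have skew (w) : S w w ∈ Ω.skewAdjointSubmodule := by
    have := h.mem_right (u₀ ⊗ₜ w) (u₀ ⊗ₜ w)
    rwa [hS, Submodule.smul_mem_iff _ hu₀] at this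
  obtain ⟨κ, hκ⟩ := exists_eq_smul_symmProdEnd hΩ hΩ' symm skew hc
  exact ⟨κ, fun u v w w' ↦ by rw [hS, hκ, smul_comm]⟩

end IsSkewCurvaturePair

end Components

section Classification

variable {K U W : Type*} [Field K] [NeZero (2 : K)] [AddCommGroup U] [Module K U]
  [AddCommGroup W] [Module K W] {B : U →ₗ[K] U →ₗ[K] K} {Ω : W →ₗ[K] W →ₗ[K] K}

lemma IsSkewCurvatureTensor.exists_eq_smul_stdSkewCurvature
    (hB : B.IsSymm) (hB' : B.SeparatingLeft) (hΩ : Ω.IsAlt) (hΩ' : Ω.SeparatingLeft)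
    (hU : 3 ≤ Module.rank K U) (hW : 3 ≤ Module.rank K W)
    {R : (U ⊗[K] W) →ₗ[K] (U ⊗[K] W) →ₗ[K] Module.End K (U ⊗[K] W)}
    (hR : IsSkewCurvatureTensor (soSp B Ω) R) : ∃ κ : K, R = κ • stdSkewCurvature B Ω := by
  have := nontrivial_of_three_le_rank hU
  have := nontrivial_of_three_le_rank hW
  obtain ⟨A, C, hAC, hRAC⟩ := hR.exists_isSkewCurvaturePair hB (ne_zero_of_separatingLeft hB')
  obtain ⟨κ, hC⟩ := hAC.exists_right_tmul_eq_smul_symmProdEnd hB hB' hΩ hΩ' hU hW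
  have hA := hAC.left_tmul_eq_smul_wedgeEnd hB hΩ hW hC
  refine ⟨κ, TensorProduct.ext' fun u w ↦ TensorProduct.ext' fun v w' ↦ ?_⟩
  rw [hRAC, hA, hC, LinearMap.smul_apply, LinearMap.smul_apply, stdSkewCurvature_tmul, smul_add,
    LinearMap.rTensor_smul, LinearMap.lTensor_smul]

theorem stmt13_general (hB : B.IsSymm) (hB' : B.SeparatingLeft) (hΩ : Ω.IsAlt)
    (hΩ' : Ω.SeparatingLeft) (hU : 3 ≤ Module.rank K U) (hW : 3 ≤ Module.rank K W) :
    ∃ R₀ : (U ⊗[K] W) →ₗ[K] (U ⊗[K] W) →ₗ[K] Module.End K (U ⊗[K] W),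
      IsSkewCurvatureTensor (soSp B Ω) R₀ ∧ R₀ ≠ 0 ∧
        ∀ R, IsSkewCurvatureTensor (soSp B Ω) R → ∃ c : K, R = c • R₀ := by
  have := nontrivial_of_three_le_rank hU
  have := nontrivial_of_three_le_rank hW
  exact ⟨stdSkewCurvature B Ω, isSkewCurvatureTensor_stdSkewCurvature hB hΩ,
    stdSkewCurvature_ne_zero hB (ne_zero_of_separatingLeft hB') (ne_zero_of_separatingLeft hΩ'),
    fun R hR ↦ hR.exists_eq_smul_stdSkewCurvature hB hB' hΩ hΩ' hU hW⟩

end Classification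

/-- for `U` of dimension `n ≥ 3` with a nondegenerate symmetric form
`B`, `W` of dimension `2m` (`m ≥ 2`) with a nondegenerate alternating form `Ω`,
the space `𝓡̄(𝔤)` of skew-curvature tensors of type
`𝔤 = so(B) ⊗ id + id ⊗ sp(Ω) ⊆ End(U ⊗ W)` is one-dimensional. -/
theorem stmt13 {U W : Type*}
    [AddCommGroup U] [Module ℂ U] [FiniteDimensional ℂ U]
    [AddCommGroup W] [Module ℂ W] [FiniteDimensional ℂ W]
    (n m : ℕ) (hn : 3 ≤ n) (hm : 2 ≤ m)
    (hdimU : Module.finrank ℂ U = n) (hdimW : Module.finrank ℂ W = 2 * m)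
    (B : U →ₗ[ℂ] U →ₗ[ℂ] ℂ)
    (hBsymm : ∀ x y : U, B x y = B y x)
    (hBnd : ∀ x : U, (∀ y : U, B x y = 0) → x = 0)
    (Ω : W →ₗ[ℂ] W →ₗ[ℂ] ℂ)
    (hΩalt : ∀ x : W, Ω x x = 0)
    (hΩnd : ∀ x : W, (∀ y : W, Ω x y = 0) → x = 0)
    (g : Submodule ℂ (Module.End ℂ (U ⊗[ℂ] W)))
    (hg : g = Submodule.span ℂ
      {T : Module.End ℂ (U ⊗[ℂ] W) |
        ∃ A : Module.End ℂ U, ∃ C : Module.End ℂ W,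
          (∀ x y : U, B (A x) y + B x (A y) = 0) ∧
          (∀ x y : W, Ω (C x) y + Ω x (C y) = 0) ∧
          T = TensorProduct.map A LinearMap.id + TensorProduct.map LinearMap.id C}) :
    ∃ R₀ : (U ⊗[ℂ] W) →ₗ[ℂ] (U ⊗[ℂ] W) →ₗ[ℂ] Module.End ℂ (U ⊗[ℂ] W),
      IsSkewCurv g R₀ ∧ R₀ ≠ 0 ∧
      ∀ R, IsSkewCurv g R → ∃ c : ℂ, R = c • R₀ := by
  rw [hg, span_eq_soSp]
  refine stmt13_general ⟨hBsymm⟩ hBnd hΩalt hΩnd ?_ ?_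
  · rw [← Module.finrank_eq_rank, hdimU]
    exact_mod_cast hn
  · rw [← Module.finrank_eq_rank, hdimW]
    exact_mod_cast (by lia : 3 ≤ 2 * m)
end
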